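/- arXiv:2303.12632 — 12 statements merged into one kernel-verified Lean document; each statement's English description precedes it below -/
import Mathlib

section
/- Let Δ be a positive integer and let G be a finite simple graph with n vertices, m edges, and maximum degree at most Δ. If d ∈ {0, 1, ..., Δ−1} is an integer such that 2Δd/(Δ+d) ≤ 2m/n ≤ 2Δ(d+1)/(Δ+d+1), then irr(G) ≤ d(d+1)·n + (1/Δ)·(Δ² − (2d+1)Δ − d² − d)·m. -/
open Finset SimpleGraph

/-- The irregularity of a graph: `irr G = ∑_{uv ∈ E(G)} |d_G(u) - d_G(v)|`. -/
def irr {V : Type*} [Fintype V] (G : SimpleGraph V) [DecidableRel G.Adj] : ℤ :=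
  ∑ e ∈ G.edgeFinset, Sym2.lift ⟨fun u v => |(G.degree u : ℤ) - (G.degree v : ℤ)|,
    fun u v => by simp [abs_sub_comm]⟩ e

theorem edge_aux (Δ d a b : ℕ) (ha : 0 < a) (hb : 0 < b) (haΔ : a ≤ Δ) :
    (a : ℝ) - b ≤ (d : ℝ) * (d + 1) * (1 / a + 1 / b) +
      (1 / (Δ : ℝ)) * ((Δ : ℝ) ^ 2 - (2 * d + 1) * Δ - (d : ℝ) ^ 2 - d) := by
  have hΔ : 0 < Δ := by omega
  have ha' : (0 : ℝ) < a := by exact_mod_cast ha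
  have hb' : (0 : ℝ) < b := by exact_mod_cast hb
  have hΔ' : (0 : ℝ) < Δ := by exact_mod_cast hΔ
  have hle : (a : ℝ) ≤ Δ := by exact_mod_cast haΔ
  have hinv : 1 / (Δ : ℝ) ≤ 1 / a := one_div_le_one_div_of_le ha' hle
  have hC : (0 : ℝ) ≤ (d : ℝ) * (d + 1) := by positivity
  have h1 := mul_le_mul_of_nonneg_left hinv hC
  have hz : (0 : ℤ) ≤ ((b : ℤ) - d) * ((b : ℤ) - d - 1) := by
    rcases le_or_gt ((b : ℤ)) d with h | h
    · exact mul_nonneg_of_nonpos_of_nonpos (by omega) (by omega)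
    · exact mul_nonneg (by omega) (by omega)
  have hr : (0 : ℝ) ≤ ((b : ℝ) - d) * ((b : ℝ) - d - 1) := by exact_mod_cast hz
  have h2 : 0 ≤ (((b : ℝ) - d) * ((b : ℝ) - d - 1)) / b := by positivity
  have e2 : (((b : ℝ) - d) * ((b : ℝ) - d - 1)) / b =
      b - (2 * d + 1) + (d : ℝ) * (d + 1) * (1 / b) := by
    field_simp
    ring
  have e3 : (1 / (Δ : ℝ)) * ((Δ : ℝ) ^ 2 - (2 * d + 1) * Δ - (d : ℝ) ^ 2 - d) =
      Δ - (2 * d + 1) - (d : ℝ) * (d + 1) * (1 / Δ) := by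
    field_simp
    ring
  rw [e3]
  rw [e2] at h2
  linarith

theorem inv_sum_aux {V : Type*} [Fintype V] (G : SimpleGraph V) [DecidableRel G.Adj]
    [DecidableEq V] :
    ∑ e ∈ G.edgeFinset, ∑ v : V, (if v ∈ e then 1 / (G.degree v : ℝ) else 0)
      ≤ (Fintype.card V : ℝ) := by
  rw [Finset.sum_comm]
  have : ∀ v : V, ∑ e ∈ G.edgeFinset, (if v ∈ e then 1 / (G.degree v : ℝ) else 0) ≤ 1 := by
    intro v
    rw [← Finset.sum_filter, ← SimpleGraph.incidenceFinset_eq_filter, Finset.sum_const,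
      SimpleGraph.card_incidenceFinset_eq_degree, nsmul_eq_mul, mul_one_div]
    exact div_self_le_one _
  calc _ ≤ ∑ v : V, (1 : ℝ) := Finset.sum_le_sum fun v _ => this v
    _ = _ := by simp

theorem stmt_0 {V : Type*} [Fintype V] [Nonempty V] (G : SimpleGraph V) [DecidableRel G.Adj]
    (Δ d : ℕ) (hΔ : 0 < Δ) (hd : d < Δ)
    (hmax : ∀ v : V, G.degree v ≤ Δ)
    (n : ℝ) (hn : n = (Fintype.card V : ℝ))
    (m : ℝ) (hm : m = (G.edgeFinset.card : ℝ))
    (h1 : 2 * (Δ : ℝ) * d / ((Δ : ℝ) + d) ≤ 2 * m / n)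
    (h2 : 2 * m / n ≤ 2 * (Δ : ℝ) * (d + 1) / ((Δ : ℝ) + d + 1)) :
    (irr G : ℝ) ≤ (d : ℝ) * (d + 1) * n +
      (1 / (Δ : ℝ)) * ((Δ : ℝ) ^ 2 - (2 * d + 1) * Δ - (d : ℝ) ^ 2 - d) * m := by
  classical
  have key : (irr G : ℝ) ≤ ∑ e ∈ G.edgeFinset, ((d : ℝ) * (d + 1) *
      (∑ v : V, (if v ∈ e then 1 / (G.degree v : ℝ) else 0)) +
      (1 / (Δ : ℝ)) * ((Δ : ℝ) ^ 2 - (2 * d + 1) * Δ - (d : ℝ) ^ 2 - d)) := by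
    unfold irr
    rw [Int.cast_sum]
    refine Finset.sum_le_sum fun e he => ?_
    induction e using Sym2.ind with
    | _ u v =>
      have huv : G.Adj u v := by simpa using he
      have hu : 0 < G.degree u := (G.degree_pos_iff_exists_adj u).2 ⟨v, huv⟩
      have hv : 0 < G.degree v := (G.degree_pos_iff_exists_adj v).2 ⟨u, huv.symm⟩
      have hs : (∑ w : V, (if w ∈ s(u, v) then 1 / (G.degree w : ℝ) else 0)) =
          1 / (G.degree u : ℝ) + 1 / (G.degree v : ℝ) := by
        rw [← Finset.sum_filter, ← Finset.sum_pair (f := fun w => 1 / (G.degree w : ℝ)) huv.ne]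
        congr 1
        ext w
        simp
      rw [hs, Sym2.lift_mk]
      push_cast
      have a1 := edge_aux Δ d _ _ hu hv (hmax u)
      have a2 := edge_aux Δ d _ _ hv hu (hmax v)
      rw [add_comm (1 / (G.degree v : ℝ))] at a2
      exact abs_le.2 ⟨by linarith, a1⟩
  rw [Finset.sum_add_distrib, ← Finset.mul_sum, Finset.sum_const, nsmul_eq_mul, ← hm] at key
  have h3 := mul_le_mul_of_nonneg_left (inv_sum_aux G)
    (show (0 : ℝ) ≤ (d : ℝ) * (d + 1) by positivity)
  rw [← hn] at h3
  linarith
end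

section
/- Let Δ be a positive integer and let G be a finite simple graph with n ≥ 1 vertices, m edges, and maximum degree at most Δ. Let d = ⌊Δm/(Δn−m)⌋. Then irr(G) ≤ d(d+1)·n + (1/Δ)·(Δ² − (2d+1)Δ − d² − d)·m. -/
open Finset SimpleGraph

theorem real_aux (a b D : ℕ) (d : ℤ) (ha : 0 < a) (hb : 0 < b) (hbD : b ≤ D) :
    (b : ℝ) - a ≤ (d : ℝ) * (d + 1) * (1 / (a : ℝ) + 1 / (b : ℝ) - 1 / (D : ℝ))
      + (D : ℝ) - 2 * d - 1 := by
  have hk : (0 : ℝ) ≤ (d : ℝ) * (d + 1) := by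
    have : (0 : ℤ) ≤ d * (d + 1) := by
      rcases le_or_gt 0 d with h | h
      · positivity
      · exact mul_nonneg_of_nonpos_of_nonpos (by omega) (by omega)
    exact_mod_cast this
  have h1 : (0 : ℝ) ≤ ((a : ℝ) - d) * (a - d - 1) := by
    have : (0 : ℤ) ≤ ((a : ℤ) - d) * (a - d - 1) := by
      rcases le_or_gt ((a : ℤ) - d) 0 with h | h
      · exact mul_nonneg_of_nonpos_of_nonpos h (by omega)
      · exact mul_nonneg (by omega) (by omega)
    exact_mod_cast this
  have ha' : (0 : ℝ) < a := by exact_mod_cast ha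
  have hb' : (0 : ℝ) < b := by exact_mod_cast hb
  have hbD' : (b : ℝ) ≤ D := by exact_mod_cast hbD
  have h2 : 1 / (D : ℝ) ≤ 1 / (b : ℝ) := one_div_le_one_div_of_le hb' hbD'
  have h3 : 2 * (d : ℝ) + 1 - a ≤ (d : ℝ) * (d + 1) * (1 / (a : ℝ)) := by
    rw [mul_one_div, le_div_iff₀ ha']
    nlinarith
  nlinarith [mul_nonneg hk (sub_nonneg.2 h2)]

theorem stmt_1 {V : Type*} [Fintype V] [Nonempty V] (G : SimpleGraph V) [DecidableRel G.Adj]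
    (Δ : ℕ) (hΔ : 0 < Δ)
    (hmax : ∀ v : V, G.degree v ≤ Δ)
    (n : ℝ) (hn : n = (Fintype.card V : ℝ))
    (m : ℝ) (hm : m = (G.edgeFinset.card : ℝ))
    (d : ℤ) (hd : d = ⌊(Δ : ℝ) * m / ((Δ : ℝ) * n - m)⌋) :
    (irr G : ℝ) ≤ (d : ℝ) * (d + 1) * n +
      (1 / (Δ : ℝ)) * ((Δ : ℝ) ^ 2 - (2 * d + 1) * Δ - (d : ℝ) ^ 2 - d) * m := by
  classical
  subst hn hm
  have hD : (0 : ℝ) < Δ := by exact_mod_cast hΔ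
  have hk : (0 : ℝ) ≤ (d : ℝ) * (d + 1) := by
    have : (0 : ℤ) ≤ d * (d + 1) := by
      rcases le_or_gt 0 d with h | h
      · positivity
      · exact mul_nonneg_of_nonpos_of_nonpos (by omega) (by omega)
    exact_mod_cast this
  have hS : ∑ e ∈ G.edgeFinset, ∑ w : V, (if w ∈ e then 1 / (G.degree w : ℝ) else 0)
      ≤ (Fintype.card V : ℝ) := by
    rw [Finset.sum_comm]
    have : ∀ w : V, ∑ e ∈ G.edgeFinset, (if w ∈ e then 1 / (G.degree w : ℝ) else 0) ≤ 1 := by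
      intro w
      rw [← Finset.sum_filter, Finset.sum_const, ← G.incidenceFinset_eq_filter,
        G.card_incidenceFinset_eq_degree, nsmul_eq_mul, mul_one_div]
      exact div_self_le_one _
    calc _ ≤ ∑ w : V, (1 : ℝ) := Finset.sum_le_sum fun w _ => this w
      _ = _ := by simp
  have hE : (irr G : ℝ) ≤ ∑ e ∈ G.edgeFinset,
      ((d : ℝ) * (d + 1) * (∑ w : V, (if w ∈ e then 1 / (G.degree w : ℝ) else 0))
        + ((Δ : ℝ) - 2 * d - 1 - (d : ℝ) * (d + 1) * (1 / Δ))) := by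
    unfold irr
    rw [Int.cast_sum]
    apply Finset.sum_le_sum
    intro e he
    induction e using Sym2.ind with
    | _ u v =>
    rw [mem_edgeFinset, mem_edgeSet] at he
    have huv : u ≠ v := he.ne
    have hu : 0 < G.degree u := (G.degree_pos_iff_exists_adj u).2 ⟨v, he⟩
    have hv : 0 < G.degree v := (G.degree_pos_iff_exists_adj v).2 ⟨u, he.symm⟩
    have hsum : ∑ w : V, (if w ∈ s(u, v) then 1 / (G.degree w : ℝ) else 0)
        = 1 / (G.degree u : ℝ) + 1 / (G.degree v : ℝ) := by
      rw [← Finset.sum_filter, ← Finset.sum_pair (f := fun w => 1 / (G.degree w : ℝ)) huv]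
      congr 1
      ext w
      simp
    rw [hsum, Sym2.lift_mk]
    push_cast
    have A := real_aux _ _ Δ d hu hv (hmax v)
    have B := real_aux _ _ Δ d hv hu (hmax u)
    rw [abs_le]
    constructor <;> linarith
  rw [Finset.sum_add_distrib, ← Finset.mul_sum, Finset.sum_const, nsmul_eq_mul] at hE
  have hF := mul_le_mul_of_nonneg_left hS hk
  have hC : (1 / (Δ : ℝ)) * ((Δ : ℝ) ^ 2 - (2 * d + 1) * Δ - (d : ℝ) ^ 2 - d)
      = (Δ : ℝ) - 2 * d - 1 - (d : ℝ) * (d + 1) * (1 / Δ) := by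
    field_simp
    ring
  rw [hC]
  linarith
end

section
/- Let Δ be a positive integer and let G be a finite simple graph with n ≥ 1 vertices, m edges, and maximum degree at most Δ. Then irr(G) ≤ (Δn − 2m)·Δ·m / (Δn − m). -/
open Finset SimpleGraph

theorem edge_aux_s2 (a b D t : ℝ) (ha : 0 < a) (hb : 0 < b) (haD : a ≤ D) (hba : b ≤ a) :
    a - b ≤ D * (1 - 2 * t + (D * (a⁻¹ + b⁻¹) - 1) * t ^ 2) := by
  have hD : 0 < D := lt_of_lt_of_le ha haD
  have hq : 0 < D * (a + b) - a * b := by nlinarith [mul_pos hD ha, mul_pos hD hb]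
  have hab : 0 < a * b := mul_pos ha hb
  have hy : D * (a⁻¹ + b⁻¹) - 1 = (D * (a + b) - a * b) / (a * b) := by
    field_simp
    ring
  rw [hy]
  have h1 : 1 - (a * b) / (D * (a + b) - a * b) ≤
      1 - 2 * t + (D * (a + b) - a * b) / (a * b) * t ^ 2 := by
    generalize D * (a + b) - a * b = q at *
    generalize a * b = p at *
    have : 1 - 2 * t + q / p * t ^ 2 - (1 - p / q) = (q * t - p) ^ 2 / (p * q) := by
      field_simp
      ring
    have h2 : 0 ≤ (q * t - p) ^ 2 / (p * q) := by positivity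
    linarith
  refine le_trans ?_ (mul_le_mul_of_nonneg_left h1 hD.le)
  have h3 : D * (1 - (a * b) / (D * (a + b) - a * b)) - (a - b)
      = (D - a) * (D * (a + b) - a * b + b ^ 2) / (D * (a + b) - a * b) := by
    have := hq.ne'
    rw [eq_div_iff this, sub_mul, mul_assoc, sub_mul, div_mul_cancel₀ _ this]
    ring
  have h4 : 0 ≤ (D - a) * (D * (a + b) - a * b + b ^ 2) / (D * (a + b) - a * b) :=
    div_nonneg (mul_nonneg (by linarith) (by positivity)) hq.le
  linarith

theorem edge_abs (a b D t : ℝ) (ha : 0 < a) (hb : 0 < b) (haD : a ≤ D) (hbD : b ≤ D) :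
    |a - b| ≤ D * (1 - 2 * t + (D * (a⁻¹ + b⁻¹) - 1) * t ^ 2) := by
  rcases le_total b a with h | h
  · rw [abs_of_nonneg (by linarith)]
    exact edge_aux_s2 a b D t ha hb haD h
  · rw [abs_sub_comm, abs_of_nonneg (by linarith), add_comm a⁻¹]
    exact edge_aux_s2 b a D t hb ha hbD h

theorem stmt_2 {V : Type*} [Fintype V] [Nonempty V] (G : SimpleGraph V) [DecidableRel G.Adj]
    (Δ : ℕ) (hΔ : 0 < Δ)
    (hmax : ∀ v : V, G.degree v ≤ Δ)
    (n : ℝ) (hn : n = (Fintype.card V : ℝ))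
    (m : ℝ) (hm : m = (G.edgeFinset.card : ℝ)) :
    (irr G : ℝ) ≤ ((Δ : ℝ) * n - 2 * m) * Δ * m / ((Δ : ℝ) * n - m) := by
  classical
  have hdeg : 2 * m ≤ Δ * n := by
    have h := G.sum_degrees_eq_twice_card_edges
    have h2 : ∑ v, G.degree v ≤ ∑ _v : V, Δ := Finset.sum_le_sum fun v _ => hmax v
    rw [h, Finset.sum_const, Finset.card_univ, smul_eq_mul] at h2
    subst hn hm
    rw [mul_comm (Δ : ℝ)]
    exact_mod_cast h2
  have hm0 : 0 ≤ m := by rw [hm]; positivity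
  have hD : (0 : ℝ) < Δ := by exact_mod_cast hΔ
  have hn0 : 0 < n := by
    rw [hn]
    exact_mod_cast Fintype.card_pos
  have hT : 0 < Δ * n - m := by nlinarith [mul_pos hD hn0]
  set x : Sym2 V → ℝ := fun e => ∑ v, if v ∈ e then ((G.degree v : ℝ))⁻¹ else 0 with hx
  have hxsum : ∑ e ∈ G.edgeFinset, x e ≤ n := by
    rw [hx, Finset.sum_comm, hn]
    have : (Fintype.card V : ℝ) = ∑ _v : V, (1 : ℝ) := by simp
    rw [this]
    refine Finset.sum_le_sum fun v _ => ?_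
    rw [← Finset.sum_filter, Finset.sum_const, nsmul_eq_mul, ← G.incidenceFinset_eq_filter,
      G.card_incidenceFinset_eq_degree]
    exact mul_inv_le_one
  set t : ℝ := m / (Δ * n - m) with ht
  have hsum : (irr G : ℝ) ≤
      ∑ e ∈ G.edgeFinset, (Δ : ℝ) * (1 - 2 * t + (Δ * x e - 1) * t ^ 2) := by
    unfold irr
    rw [Int.cast_sum]
    refine Finset.sum_le_sum fun e he => ?_
    induction e using Sym2.ind with
    | _ u v =>
      have huv : G.Adj u v := by simpa using he
      have hxe : x s(u, v) = (G.degree u : ℝ)⁻¹ + (G.degree v : ℝ)⁻¹ := by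
        rw [hx]
        simp only [Sym2.mem_iff]
        rw [← Finset.sum_filter]
        have : (Finset.univ.filter fun w => w = u ∨ w = v) = {u, v} := by
          ext w
          simp
        rw [this, Finset.sum_pair huv.ne]
      rw [hxe]
      have hu : 0 < G.degree u := (G.degree_pos_iff_exists_adj u).2 ⟨v, huv⟩
      have hv : 0 < G.degree v := (G.degree_pos_iff_exists_adj v).2 ⟨u, huv.symm⟩
      have := edge_abs (G.degree u) (G.degree v) Δ t (by exact_mod_cast hu)
        (by exact_mod_cast hv) (by exact_mod_cast hmax u) (by exact_mod_cast hmax v)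
      simpa using this
  refine hsum.trans ?_
  have hexp : ∑ e ∈ G.edgeFinset, (Δ : ℝ) * (1 - 2 * t + (Δ * x e - 1) * t ^ 2)
      = Δ * (m * (1 - 2 * t) + (Δ * (∑ e ∈ G.edgeFinset, x e) - m) * t ^ 2) := by
    rw [← Finset.mul_sum, Finset.sum_add_distrib, ← Finset.sum_mul,
      Finset.sum_sub_distrib (fun e => (Δ : ℝ) * x e) (fun _ => (1 : ℝ)),
      ← Finset.mul_sum, Finset.sum_const, Finset.sum_const, nsmul_eq_mul, nsmul_eq_mul, ← hm,
      mul_one]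
  rw [hexp]
  have hle : Δ * (m * (1 - 2 * t) + (Δ * (∑ e ∈ G.edgeFinset, x e) - m) * t ^ 2)
      ≤ Δ * (m * (1 - 2 * t) + (Δ * n - m) * t ^ 2) := by
    gcongr
  refine hle.trans (le_of_eq ?_)
  have hT' := hT.ne'
  have htT : t * (Δ * n - m) = m := div_mul_cancel₀ _ hT'
  rw [eq_div_iff hT']
  linear_combination (Δ : ℝ) * (-2 * m + t * (Δ * n - m) + m) * htT
end

section
/- Let Δ be a positive integer and let G be a finite simple graph with n ≥ 1 vertices and maximum degree at most Δ. Then irr(G) < (3 − 2√2)·Δ²·n. -/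
open Finset SimpleGraph

lemma edge_ineq (a b D : ℕ) (ha : 0 < a) (hb : 0 < b) (hab : b ≤ a) (haD : a ≤ D) :
    |((a : ℝ) - b)| < (3 - 2 * Real.sqrt 2) * (D : ℝ) ^ 2 * ((a : ℝ)⁻¹ + (b : ℝ)⁻¹) := by
  have hs : Real.sqrt 2 ^ 2 = 2 := Real.sq_sqrt (by norm_num)
  have hc : 3 - 2 * Real.sqrt 2 = (Real.sqrt 2 - 1) ^ 2 := by linarith [hs, sub_sq (Real.sqrt 2) 1]
  have ha' : (0 : ℝ) < a := by exact_mod_cast ha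
  have hb' : (0 : ℝ) < b := by exact_mod_cast hb
  have hab' : (b : ℝ) ≤ a := by exact_mod_cast hab
  have haD' : (a : ℝ) ≤ D := by exact_mod_cast haD
  have hne : (Real.sqrt 2 - 1) * a - b ≠ 0 := by
    intro h
    apply irrational_sqrt_two
    refine ⟨((a : ℚ) + b) / a, ?_⟩
    push_cast
    rw [div_eq_iff ha'.ne']
    linarith
  have hpos : 0 < ((Real.sqrt 2 - 1) * a - b) ^ 2 := by positivity
  rw [abs_of_nonneg (by linarith)]
  have h1 : (a : ℝ) - b < (3 - 2 * Real.sqrt 2) * (a : ℝ) ^ 2 * ((a : ℝ)⁻¹ + (b : ℝ)⁻¹) := by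
    have e : (3 - 2 * Real.sqrt 2) * (a : ℝ) ^ 2 * ((a : ℝ)⁻¹ + (b : ℝ)⁻¹)
        = ((3 - 2 * Real.sqrt 2) * a * (a + b)) / b := by
      field_simp
      ring
    rw [e, lt_div_iff₀ hb']
    have : ((Real.sqrt 2 - 1) * a - b) ^ 2 =
      (3 - 2 * Real.sqrt 2) * a * (a + b) - (a - b) * b + (Real.sqrt 2 ^ 2 - 2) * a ^ 2 := by ring
    rw [hs] at this
    linarith
  refine h1.trans_le ?_
  have : 0 ≤ 3 - 2 * Real.sqrt 2 := by rw [hc]; positivity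
  gcongr

theorem stmt_3 {V : Type*} [Fintype V] [Nonempty V] (G : SimpleGraph V) [DecidableRel G.Adj]
    (Δ : ℕ) (hΔ : 0 < Δ)
    (hmax : ∀ v : V, G.degree v ≤ Δ) :
    (irr G : ℝ) < (3 - 2 * Real.sqrt 2) * (Δ : ℝ) ^ 2 * (Fintype.card V : ℝ) := by
  classical
  have hc : 0 < 3 - 2 * Real.sqrt 2 := by
    have hs : Real.sqrt 2 ^ 2 = 2 := Real.sq_sqrt (by norm_num)
    nlinarith [Real.sqrt_nonneg 2]
  have hD : (0 : ℝ) < Δ := by exact_mod_cast hΔ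
  have hn : (0 : ℝ) < Fintype.card V := by exact_mod_cast Fintype.card_pos
  set C := (3 - 2 * Real.sqrt 2) * (Δ : ℝ) ^ 2 with hC
  have hCpos : 0 < C := by positivity
  have hsum : ∑ e ∈ G.edgeFinset, (∑ v : V, if v ∈ e then ((G.degree v : ℝ))⁻¹ else 0)
      ≤ Fintype.card V := by
    rw [Finset.sum_comm]
    have : ∀ v ∈ (Finset.univ : Finset V),
        (∑ e ∈ G.edgeFinset, if v ∈ e then ((G.degree v : ℝ))⁻¹ else 0) ≤ 1 := by
      intro v _
      rw [← Finset.sum_filter, ← G.incidenceFinset_eq_filter v, Finset.sum_const,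
        G.card_incidenceFinset_eq_degree, nsmul_eq_mul]
      exact mul_inv_le_one
    simpa using Finset.sum_le_sum this
  have hedge : ∀ e ∈ G.edgeFinset,
      ((Sym2.lift ⟨fun u v => |(G.degree u : ℤ) - (G.degree v : ℤ)|,
        fun u v => by simp [abs_sub_comm]⟩ e : ℤ) : ℝ)
      < C * (∑ v : V, if v ∈ e then ((G.degree v : ℝ))⁻¹ else 0) := by
    intro e
    induction e using Sym2.ind with
    | _ u v =>
      intro he
      have hadj : G.Adj u v := by simpa using he
      have hu : 0 < G.degree u := (G.degree_pos_iff_exists_adj u).2 ⟨v, hadj⟩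
      have hv : 0 < G.degree v := (G.degree_pos_iff_exists_adj v).2 ⟨u, hadj.symm⟩
      have hS : (∑ w : V, if w ∈ s(u, v) then ((G.degree w : ℝ))⁻¹ else 0)
          = (G.degree u : ℝ)⁻¹ + (G.degree v : ℝ)⁻¹ := by
        rw [← Finset.sum_filter, ← Finset.sum_pair (f := fun w => ((G.degree w : ℝ))⁻¹) hadj.ne]
        congr 1
        ext w
        simp
      rw [hS, Sym2.lift_mk]
      push_cast
      rcases le_total (G.degree v) (G.degree u) with h | h
      · exact edge_ineq _ _ _ hu hv h (hmax u)
      · rw [abs_sub_comm, add_comm]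
        exact edge_ineq _ _ _ hv hu h (hmax v)
  unfold irr
  rw [Int.cast_sum]
  rcases G.edgeFinset.eq_empty_or_nonempty with h | h
  · rw [h, Finset.sum_empty]
    positivity
  · refine (Finset.sum_lt_sum_of_nonempty h hedge).trans_le ?_
    rw [← Finset.mul_sum]
    gcongr
end

section
/- Let Δ > δ ≥ 0 be integers and let G be a finite simple graph with n vertices, maximum degree at most Δ, and minimum degree at least δ. Let δ* ∈ {δ, δ+1, ..., Δ} be an integer maximizing the quantity Δ(Δ−i)i/(Δ+i) over all i ∈ {δ, ..., Δ}. Then irr(G) ≤ (Δ(Δ−δ*)δ*/(Δ+δ*))·n. -/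
open Finset SimpleGraph

lemma edge_bound_aux (a b D C : ℝ) (ha : 0 < a) (hab : a ≤ b) (hbD : b ≤ D)
    (hC : D * (D - a) * a / (D + a) ≤ C) : b - a ≤ C / a + C / b := by
  have hb : 0 < b := lt_of_lt_of_le ha hab
  have hD : 0 < D := lt_of_lt_of_le hb hbD
  have h1 : b * (b - a) * a / (b + a) ≤ D * (D - a) * a / (D + a) := by
    rw [div_le_div_iff₀ (by positivity) (by positivity)]
    have h2 : 0 ≤ (D - b) * (D * b + a * (D + b) - a ^ 2) := by
      apply mul_nonneg (by linarith)
      nlinarith [mul_pos ha hb, mul_pos ha hD, mul_pos hD hb]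
    nlinarith [mul_nonneg ha.le h2]
  have h3 := h1.trans hC
  rw [div_le_iff₀ (by positivity)] at h3
  have h4 : C / a + C / b = C * (b + a) / (a * b) := by field_simp
  rw [h4, le_div_iff₀ (by positivity)]
  linarith

theorem stmt_4 {V : Type*} [Fintype V] (G : SimpleGraph V) [DecidableRel G.Adj]
    (Δ δ : ℕ) (hδΔ : δ < Δ)
    (hmax : ∀ v : V, G.degree v ≤ Δ)
    (hmin : ∀ v : V, δ ≤ G.degree v)
    (δs : ℕ) (hδs₁ : δ ≤ δs) (hδs₂ : δs ≤ Δ)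
    (hδsmax : ∀ i : ℕ, δ ≤ i → i ≤ Δ →
      (Δ : ℝ) * ((Δ : ℝ) - i) * i / ((Δ : ℝ) + i) ≤
        (Δ : ℝ) * ((Δ : ℝ) - δs) * δs / ((Δ : ℝ) + δs)) :
    (irr G : ℝ) ≤
      (Δ : ℝ) * ((Δ : ℝ) - δs) * δs / ((Δ : ℝ) + δs) * (Fintype.card V : ℝ) := by
  classical
  set C : ℝ := (Δ : ℝ) * ((Δ : ℝ) - δs) * δs / ((Δ : ℝ) + δs) with hCdef
  have hC0 : 0 ≤ C := by
    have : (δs : ℝ) ≤ Δ := by exact_mod_cast hδs₂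
    have : 0 ≤ (Δ : ℝ) - δs := by linarith
    positivity
  have key : ∀ e ∈ G.edgeFinset, (((Sym2.lift ⟨fun u v => |(G.degree u : ℤ) - (G.degree v : ℤ)|,
      fun u v => by simp [abs_sub_comm]⟩ e : ℤ)) : ℝ) ≤
      ∑ w : V, if w ∈ e then C / (G.degree w : ℝ) else 0 := by
    intro e
    induction e using Sym2.ind with
    | _ u v =>
      intro he
      have hadj : G.Adj u v := by simpa using he
      have hsum : (∑ w : V, if w ∈ s(u, v) then C / (G.degree w : ℝ) else 0)
          = C / (G.degree u : ℝ) + C / (G.degree v : ℝ) := by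
        rw [← Finset.sum_filter]
        have : (Finset.univ.filter fun w => w ∈ s(u, v)) = {u, v} := by
          ext w; simp
        rw [this, Finset.sum_pair hadj.ne]
      rw [hsum, Sym2.lift_mk]
      push_cast
      have hu : 0 < G.degree u := (G.degree_pos_iff_exists_adj u).2 ⟨v, hadj⟩
      have hv : 0 < G.degree v := (G.degree_pos_iff_exists_adj v).2 ⟨u, hadj.symm⟩
      rcases le_total (G.degree u) (G.degree v) with h | h
      · have hb := edge_bound_aux (G.degree u) (G.degree v) Δ C (by exact_mod_cast hu)
          (by exact_mod_cast h) (by exact_mod_cast hmax v) (hδsmax _ (hmin u) (hmax u))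
        have h' : (G.degree u : ℝ) ≤ G.degree v := by exact_mod_cast h
        rw [abs_sub_comm, abs_of_nonneg (by linarith)]
        exact hb
      · have hb := edge_bound_aux (G.degree v) (G.degree u) Δ C (by exact_mod_cast hv)
          (by exact_mod_cast h) (by exact_mod_cast hmax u) (hδsmax _ (hmin v) (hmax v))
        have h' : (G.degree v : ℝ) ≤ G.degree u := by exact_mod_cast h
        rw [abs_of_nonneg (by linarith)]
        linarith
  unfold irr
  push_cast
  refine (Finset.sum_le_sum key).trans ?_
  rw [Finset.sum_comm]
  have hv : ∀ w ∈ (Finset.univ : Finset V),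
      (∑ e ∈ G.edgeFinset, if w ∈ e then C / (G.degree w : ℝ) else 0) ≤ C := by
    intro w _
    rw [← Finset.sum_filter, Finset.sum_const, ← SimpleGraph.incidenceFinset_eq_filter,
      SimpleGraph.card_incidenceFinset_eq_degree, nsmul_eq_mul]
    rcases Nat.eq_zero_or_pos (G.degree w) with h | h
    · simp [h, hC0]
    · have : (G.degree w : ℝ) ≠ 0 := by exact_mod_cast h.ne'
      rw [mul_div_cancel₀ _ this]
  refine (Finset.sum_le_sum hv).trans ?_
  simp [mul_comm]
end

section
/- Let Δ > δ ≥ 1 be integers and let G be a finite simple graph with n vertices, m edges, maximum degree at most Δ, and minimum degree at least δ. If δ ≤ 2m/n ≤ 2Δδ/(Δ+δ), then irr(G) ≤ 2Δm − δΔn. -/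
open Finset SimpleGraph

lemma edge_bound (x y D d : ℝ) (hd : 0 < d) (hx : d ≤ x) (hxy : x ≤ y) (hy : y ≤ D) :
    y - x ≤ (D - d * D / x) + (D - d * D / y) := by
  have hx0 : 0 < x := by linarith
  have hy0 : 0 < y := by linarith
  have h1 : d * D / x ≤ D + d - x := by
    rw [div_le_iff₀ hx0]
    nlinarith [mul_nonneg (sub_nonneg.2 hx) (sub_nonneg.2 (hxy.trans hy))]
  have h2 : d * D / y ≤ D + d - y := by
    rw [div_le_iff₀ hy0]
    nlinarith [mul_nonneg (sub_nonneg.2 (hx.trans hxy)) (sub_nonneg.2 hy)]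
  have h3 : d * D / x ≤ D := by
    rw [div_le_iff₀ hx0]
    nlinarith
  linarith

lemma sum_edges {V : Type*} [Fintype V] [DecidableEq V] (G : SimpleGraph V) [DecidableRel G.Adj]
    (f : V → ℝ) :
    ∑ e ∈ G.edgeFinset, ∑ v ∈ e.toFinset, f v = ∑ v, (G.degree v : ℝ) * f v := by
  rw [Finset.sum_comm' (t' := Finset.univ) (s' := fun v => G.incidenceFinset v)]
  · refine Finset.sum_congr rfl fun v _ => ?_
    rw [Finset.sum_const, card_incidenceFinset_eq_degree, nsmul_eq_mul]
  · intro e v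
    simp [incidenceSet]

theorem stmt_5 {V : Type*} [Fintype V] [Nonempty V] (G : SimpleGraph V) [DecidableRel G.Adj]
    (Δ δ : ℕ) (hδ : 1 ≤ δ) (hδΔ : δ < Δ)
    (hmax : ∀ v : V, G.degree v ≤ Δ)
    (hmin : ∀ v : V, δ ≤ G.degree v)
    (n : ℝ) (hn : n = (Fintype.card V : ℝ))
    (m : ℝ) (hm : m = (G.edgeFinset.card : ℝ))
    (h1 : (δ : ℝ) ≤ 2 * m / n)
    (h2 : 2 * m / n ≤ 2 * (Δ : ℝ) * δ / ((Δ : ℝ) + δ)) :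
    (irr G : ℝ) ≤ 2 * (Δ : ℝ) * m - (δ : ℝ) * Δ * n := by
  classical
  have hd : (0 : ℝ) < δ := by exact_mod_cast hδ
  have key : (irr G : ℝ) ≤ ∑ e ∈ G.edgeFinset, ∑ v ∈ e.toFinset,
      ((Δ : ℝ) - δ * Δ / (G.degree v : ℝ)) := by
    unfold irr
    rw [Int.cast_sum]
    refine Finset.sum_le_sum fun e he => ?_
    induction e using Sym2.ind with
    | _ u v =>
      have hadj : G.Adj u v := by simpa using he
      have hu1 : (δ : ℝ) ≤ G.degree u := by exact_mod_cast hmin u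
      have hv1 : (δ : ℝ) ≤ G.degree v := by exact_mod_cast hmin v
      have hu2 : (G.degree u : ℝ) ≤ Δ := by exact_mod_cast hmax u
      have hv2 : (G.degree v : ℝ) ≤ Δ := by exact_mod_cast hmax v
      rw [Sym2.toFinset_mk_eq, Finset.sum_pair hadj.ne]
      simp only [Sym2.lift_mk]
      push_cast
      rcases le_total (G.degree u : ℝ) (G.degree v : ℝ) with h | h
      · rw [abs_of_nonpos (by linarith)]
        linarith [edge_bound _ _ _ _ hd hu1 h hv2]
      · rw [abs_of_nonneg (by linarith)]
        linarith [edge_bound _ _ _ _ hd hv1 h hu2]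
  rw [sum_edges] at key
  refine key.trans (le_of_eq ?_)
  have hs : ∑ v, (G.degree v : ℝ) = 2 * m := by
    rw [hm]
    exact_mod_cast G.sum_degrees_eq_twice_card_edges
  have : ∀ v ∈ (Finset.univ : Finset V), (G.degree v : ℝ) * ((Δ : ℝ) - δ * Δ / (G.degree v : ℝ))
      = Δ * (G.degree v : ℝ) - δ * Δ := by
    intro v _
    have hv1 : (δ : ℝ) ≤ G.degree v := by exact_mod_cast hmin v
    have : (G.degree v : ℝ) ≠ 0 := by linarith
    field_simp
  rw [Finset.sum_congr rfl this, Finset.sum_sub_distrib, ← Finset.mul_sum, hs]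
  simp [hn]
  ring
end

section
/- Let Δ be a positive integer and let G be a finite simple graph with n vertices, m edges, and maximum degree at most Δ. Let x ≥ 0 and y be real numbers and let z_1, ..., z_Δ be nonnegative real numbers such that z_i + z_j ≥ j − i for all integers 1 ≤ i < j ≤ Δ and x + i·y ≥ i·z_i for all integers 1 ≤ i ≤ Δ. Then irr(G) ≤ n·x + 2m·y. -/
open Finset SimpleGraph

theorem stmt_6 {V : Type*} [Fintype V] (G : SimpleGraph V) [DecidableRel G.Adj]
    (Δ : ℕ) (hΔ : 0 < Δ)
    (hmax : ∀ v : V, G.degree v ≤ Δ)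
    (x y : ℝ) (z : ℕ → ℝ)
    (hx : 0 ≤ x)
    (hz : ∀ i : ℕ, 1 ≤ i → i ≤ Δ → 0 ≤ z i)
    (hzz : ∀ i j : ℕ, 1 ≤ i → i < j → j ≤ Δ → z i + z j ≥ (j : ℝ) - i)
    (hxy : ∀ i : ℕ, 1 ≤ i → i ≤ Δ → x + (i : ℝ) * y ≥ (i : ℝ) * z i) :
    (irr G : ℝ) ≤ (Fintype.card V : ℝ) * x + 2 * (G.edgeFinset.card : ℝ) * y := by
  classical
  have key : ∑ e ∈ G.edgeFinset, ∑ v ∈ univ.filter (fun v => v ∈ e), z (G.degree v)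
      = ∑ v : V, (G.degree v : ℝ) * z (G.degree v) := by
    rw [Finset.sum_comm' (t' := univ) (s' := fun v => G.edgeFinset.filter (fun e => v ∈ e))
      (by intro e v; simp)]
    refine Finset.sum_congr rfl fun v _ => ?_
    rw [Finset.sum_const, nsmul_eq_mul, ← G.card_incidenceFinset_eq_degree v,
      G.incidenceFinset_eq_filter]
  have h1 : (irr G : ℝ) ≤
      ∑ e ∈ G.edgeFinset, ∑ v ∈ univ.filter (fun v => v ∈ e), z (G.degree v) := by
    unfold irr
    rw [Int.cast_sum]
    refine Finset.sum_le_sum fun e he => ?_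
    induction e using Sym2.ind with
    | _ u v =>
      have huv : G.Adj u v := by simpa using he
      have hf : univ.filter (fun w => w ∈ s(u, v)) = {u, v} := by
        ext w; simp
      rw [hf, Finset.sum_pair huv.ne]
      have hu : 1 ≤ G.degree u := (G.degree_pos_iff_exists_adj u).2 ⟨v, huv⟩
      have hv : 1 ≤ G.degree v := (G.degree_pos_iff_exists_adj v).2 ⟨u, huv.symm⟩
      have hu' := hmax u
      have hv' := hmax v
      simp only [Sym2.lift_mk]
      push_cast
      rw [abs_le']
      have a := hz _ hu hu'
      have b := hz _ hv hv'
      rcases lt_trichotomy (G.degree u) (G.degree v) with h | h | h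
      · have := hzz _ _ hu h hv'
        have h' : (G.degree u : ℝ) < G.degree v := by exact_mod_cast h
        constructor <;> linarith
      · have h' : (G.degree u : ℝ) = G.degree v := by exact_mod_cast h
        constructor <;> linarith
      · have := hzz _ _ hv h hu'
        have h' : (G.degree v : ℝ) < G.degree u := by exact_mod_cast h
        constructor <;> linarith
  have h2 : ∑ v : V, (G.degree v : ℝ) * z (G.degree v) ≤ ∑ v : V, (x + (G.degree v : ℝ) * y) := by
    refine Finset.sum_le_sum fun v _ => ?_
    rcases Nat.eq_zero_or_pos (G.degree v) with h | h
    · simpa [h] using hx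
    · exact hxy _ h (hmax v)
  have h3 : ∑ v : V, (G.degree v : ℝ) = 2 * (G.edgeFinset.card : ℝ) := by
    exact_mod_cast G.sum_degrees_eq_twice_card_edges
  rw [Finset.sum_add_distrib, ← Finset.sum_mul, h3, Finset.sum_const, nsmul_eq_mul,
    Finset.card_univ] at h2
  linarith
end

section
/- Let Δ > δ ≥ 1 be integers and let G be a finite simple graph with n vertices, m edges, maximum degree at most Δ, and minimum degree at least δ. Let x and y be real numbers (x may be negative) and let z_δ, z_{δ+1}, ..., z_Δ be nonnegative real numbers such that z_i + z_j ≥ j − i for all integers δ ≤ i < j ≤ Δ and x + i·y ≥ i·z_i for all integers δ ≤ i ≤ Δ. Then irr(G) ≤ n·x + 2m·y. -/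
open Finset SimpleGraph

theorem sum_edges_aux {V : Type*} [Fintype V] [DecidableEq V] (G : SimpleGraph V) [DecidableRel G.Adj]
    (f : V → ℝ) :
    ∑ e ∈ G.edgeFinset, ∑ w : V, (if w ∈ e then f w else 0) = ∑ v : V, (G.degree v : ℝ) * f v := by
  rw [Finset.sum_comm]
  refine Finset.sum_congr rfl fun v _ => ?_
  rw [← Finset.sum_filter, Finset.sum_const, nsmul_eq_mul, ← SimpleGraph.incidenceFinset_eq_filter,
    SimpleGraph.card_incidenceFinset_eq_degree]

theorem stmt_7 {V : Type*} [Fintype V] (G : SimpleGraph V) [DecidableRel G.Adj]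
    (Δ δ : ℕ) (hδ : 1 ≤ δ) (hδΔ : δ < Δ)
    (hmax : ∀ v : V, G.degree v ≤ Δ)
    (hmin : ∀ v : V, δ ≤ G.degree v)
    (x y : ℝ) (z : ℕ → ℝ)
    (hz : ∀ i : ℕ, δ ≤ i → i ≤ Δ → 0 ≤ z i)
    (hzz : ∀ i j : ℕ, δ ≤ i → i < j → j ≤ Δ → z i + z j ≥ (j : ℝ) - i)
    (hxy : ∀ i : ℕ, δ ≤ i → i ≤ Δ → x + (i : ℝ) * y ≥ (i : ℝ) * z i) :
    (irr G : ℝ) ≤ (Fintype.card V : ℝ) * x + 2 * (G.edgeFinset.card : ℝ) * y := by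
  classical
  have h1 : (irr G : ℝ) ≤
      ∑ e ∈ G.edgeFinset, ∑ w : V, (if w ∈ e then z (G.degree w) else 0) := by
    unfold irr
    rw [Int.cast_sum]
    refine Finset.sum_le_sum fun e he => ?_
    induction e using Sym2.ind with
    | _ u v =>
      have hne : u ≠ v := by
        rw [SimpleGraph.mem_edgeFinset, SimpleGraph.mem_edgeSet] at he
        exact he.ne
      have hs : ∑ w : V, (if w ∈ s(u, v) then z (G.degree w) else 0)
          = z (G.degree u) + z (G.degree v) := by
        rw [← Finset.sum_filter, ← Finset.sum_pair (f := fun w => z (G.degree w)) hne]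
        refine Finset.sum_congr ?_ fun _ _ => rfl
        ext w
        simp
      rw [hs, Sym2.lift_mk]
      push_cast
      rcases lt_trichotomy (G.degree u) (G.degree v) with h | h | h
      · have := hzz _ _ (hmin u) h (hmax v)
        have h' : (G.degree u : ℝ) < G.degree v := by exact_mod_cast h
        rw [abs_of_neg (by linarith)]
        linarith
      · have := hz _ (hmin u) (hmax u)
        have := hz _ (hmin v) (hmax v)
        rw [h, sub_self, abs_zero]
        linarith
      · have := hzz _ _ (hmin v) h (hmax u)
        have h' : (G.degree v : ℝ) < G.degree u := by exact_mod_cast h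
        rw [abs_of_pos (by linarith)]
        linarith
  rw [sum_edges_aux G (fun w => z (G.degree w))] at h1
  have h2 : ∑ v : V, (G.degree v : ℝ) * z (G.degree v) ≤ ∑ v : V, (x + (G.degree v : ℝ) * y) :=
    Finset.sum_le_sum fun v _ => hxy _ (hmin v) (hmax v)
  have h3 : ∑ v : V, (G.degree v : ℝ) = 2 * (G.edgeFinset.card : ℝ) := by
    exact_mod_cast G.sum_degrees_eq_twice_card_edges
  rw [Finset.sum_add_distrib, ← Finset.sum_mul, h3, Finset.sum_const, nsmul_eq_mul,
    Finset.card_univ] at h2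
  linarith
end

section
/- Let Δ be a positive integer. Then there exists an integer i* ∈ {⌊(√2−1)Δ⌋, ⌈(√2−1)Δ⌉} such that for every integer i with 0 ≤ i ≤ Δ one has Δ(Δ−i)i/(Δ+i) ≤ Δ(Δ−i*)i*/(Δ+i*). -/
lemma aux_le (D a b : ℝ) (hD : 0 < D) (ha : 0 ≤ a) (hb : 0 ≤ b)
    (h : 0 ≤ (b - a) * (D ^ 2 - D * (a + b) - a * b)) :
    D * (D - a) * a / (D + a) ≤ D * (D - b) * b / (D + b) := by
  rw [div_le_div_iff₀ (by positivity) (by positivity)]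
  have := mul_nonneg hD.le h
  nlinarith [this]

lemma aux_up (D x a b : ℝ) (hD : 0 < D) (hx : x ^ 2 + 2 * D * x = D ^ 2) (ha : 0 ≤ a)
    (hab : a ≤ b) (hbx : b ≤ x) :
    D * (D - a) * a / (D + a) ≤ D * (D - b) * b / (D + b) := by
  refine aux_le D a b hD ha (ha.trans hab) (mul_nonneg (by linarith) ?_)
  have h1 : a * b ≤ x * x :=
    mul_le_mul (hab.trans hbx) hbx (ha.trans hab) (by linarith)
  have h2 : D * (a + b) ≤ D * (2 * x) := mul_le_mul_of_nonneg_left (by linarith) hD.le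
  nlinarith

lemma aux_down (D x a b : ℝ) (hD : 0 < D) (hx : x ^ 2 + 2 * D * x = D ^ 2) (hx0 : 0 ≤ x)
    (hab : b ≤ a) (hbx : x ≤ b) :
    D * (D - a) * a / (D + a) ≤ D * (D - b) * b / (D + b) := by
  refine aux_le D a b hD (by linarith) (by linarith)
    (mul_nonneg_of_nonpos_of_nonpos (by linarith) ?_)
  have h1 : x * x ≤ a * b := mul_le_mul (by linarith) hbx hx0 (by linarith)
  have h2 : D * (2 * x) ≤ D * (a + b) := mul_le_mul_of_nonneg_left (by linarith) hD.le
  nlinarith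

theorem stmt_9 (Δ : ℕ) (hΔ : 0 < Δ) :
    ∃ is : ℤ, (is = ⌊(Real.sqrt 2 - 1) * Δ⌋ ∨ is = ⌈(Real.sqrt 2 - 1) * Δ⌉) ∧
      ∀ i : ℤ, 0 ≤ i → i ≤ (Δ : ℤ) →
        (Δ : ℝ) * ((Δ : ℝ) - i) * i / ((Δ : ℝ) + i) ≤
          (Δ : ℝ) * ((Δ : ℝ) - is) * is / ((Δ : ℝ) + is) := by
  have hD : (0 : ℝ) < Δ := by exact_mod_cast hΔ
  have hs : Real.sqrt 2 ^ 2 = 2 := Real.sq_sqrt (by norm_num)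
  have hs1 : 1 ≤ Real.sqrt 2 := Real.one_le_sqrt.mpr (by norm_num)
  have hx0 : 0 ≤ (Real.sqrt 2 - 1) * Δ := mul_nonneg (by linarith) hD.le
  have hx : ((Real.sqrt 2 - 1) * Δ) ^ 2 + 2 * (Δ : ℝ) * ((Real.sqrt 2 - 1) * Δ) = (Δ : ℝ) ^ 2 := by
    linear_combination (Δ : ℝ) ^ 2 * hs
  generalize (Real.sqrt 2 - 1) * (Δ : ℝ) = x at *
  have key : ∀ i : ℤ, 0 ≤ i →
      (Δ : ℝ) * ((Δ : ℝ) - i) * i / ((Δ : ℝ) + i) ≤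
          (Δ : ℝ) * ((Δ : ℝ) - ⌊x⌋) * ⌊x⌋ / ((Δ : ℝ) + ⌊x⌋) ∨
      (Δ : ℝ) * ((Δ : ℝ) - i) * i / ((Δ : ℝ) + i) ≤
          (Δ : ℝ) * ((Δ : ℝ) - ⌈x⌉) * ⌈x⌉ / ((Δ : ℝ) + ⌈x⌉) := by
    intro i hi
    rcases le_total (i : ℝ) x with h | h
    · left
      exact aux_up _ x _ _ hD hx (by exact_mod_cast hi)
        (by exact_mod_cast Int.le_floor.mpr h) (Int.floor_le x)
    · right
      exact aux_down _ x _ _ hD hx hx0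
        (by exact_mod_cast Int.ceil_le.mpr h) (Int.le_ceil x)
  rcases le_total ((Δ : ℝ) * ((Δ : ℝ) - ⌊x⌋) * ⌊x⌋ / ((Δ : ℝ) + ⌊x⌋))
    ((Δ : ℝ) * ((Δ : ℝ) - ⌈x⌉) * ⌈x⌉ / ((Δ : ℝ) + ⌈x⌉)) with h | h
  · exact ⟨⌈x⌉, Or.inr rfl, fun i hi _ => (key i hi).elim (fun g => g.trans h) id⟩
  · exact ⟨⌊x⌋, Or.inl rfl, fun i hi _ => (key i hi).elim id (fun g => g.trans h)⟩
end

section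
/- Let Δ and d be integers with 1 ≤ d ≤ Δ−1. The complete bipartite graph K_{Δ,d}, which has n = Δ+d vertices, m = Δd edges, and maximum degree Δ, satisfies 2Δd/(Δ+d) ≤ 2m/n ≤ 2Δ(d+1)/(Δ+d+1) and irr(K_{Δ,d}) = d(d+1)·n + (1/Δ)·(Δ² − (2d+1)Δ − d² − d)·m, i.e., the bound of the main theorem holds with equality for K_{Δ,d} with parameter d. -/
open Finset SimpleGraph

instance {α β : Type*} : DecidableRel (completeBipartiteGraph α β).Adj := fun v w => by
  simp only [completeBipartiteGraph]; infer_instance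

theorem deg_inl (a b : ℕ) (x : Fin a) :
    (completeBipartiteGraph (Fin a) (Fin b)).degree (Sum.inl x) = b := by
  have h : (completeBipartiteGraph (Fin a) (Fin b)).neighborFinset (Sum.inl x) =
      (Finset.univ : Finset (Fin b)).map ⟨Sum.inr, Sum.inr_injective⟩ := by
    ext v
    rcases v with v | v <;> simp
  rw [← SimpleGraph.card_neighborFinset_eq_degree, h]
  simp

theorem deg_inr (a b : ℕ) (x : Fin b) :
    (completeBipartiteGraph (Fin a) (Fin b)).degree (Sum.inr x) = a := by
  have h : (completeBipartiteGraph (Fin a) (Fin b)).neighborFinset (Sum.inr x) =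
      (Finset.univ : Finset (Fin a)).map ⟨Sum.inl, Sum.inl_injective⟩ := by
    ext v
    rcases v with v | v <;> simp
  rw [← SimpleGraph.card_neighborFinset_eq_degree, h]
  simp

theorem card_edges_cb (a b : ℕ) :
    (completeBipartiteGraph (Fin a) (Fin b)).edgeFinset.card = a * b := by
  have h := SimpleGraph.sum_degrees_eq_twice_card_edges (completeBipartiteGraph (Fin a) (Fin b))
  rw [Fintype.sum_sum_type] at h
  simp only [deg_inl, deg_inr, Finset.sum_const, Finset.card_univ, Fintype.card_fin,
    smul_eq_mul] at h
  have := Nat.mul_comm a b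
  omega

theorem irr_cb (a b : ℕ) (h : b < a) :
    irr (completeBipartiteGraph (Fin a) (Fin b)) = (a * b : ℤ) * (a - b) := by
  unfold irr
  have hc : ∀ e ∈ (completeBipartiteGraph (Fin a) (Fin b)).edgeFinset,
      Sym2.lift ⟨fun u v => |((completeBipartiteGraph (Fin a) (Fin b)).degree u : ℤ) -
        ((completeBipartiteGraph (Fin a) (Fin b)).degree v : ℤ)|,
        fun u v => by simp [abs_sub_comm]⟩ e = (a : ℤ) - b := by
    intro e
    induction e using Sym2.ind with
    | _ u v =>
      intro he
      rw [SimpleGraph.mem_edgeFinset, SimpleGraph.mem_edgeSet] at he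
      have hp : (0 : ℤ) ≤ (a : ℤ) - b := by omega
      rw [Sym2.lift_mk]
      rcases u with u | u <;> rcases v with v | v
      · simp at he
      · simp only [deg_inl, deg_inr]
        rw [abs_sub_comm, abs_of_nonneg hp]
      · simp only [deg_inl, deg_inr]
        rw [abs_of_nonneg hp]
      · simp at he
  rw [Finset.sum_congr rfl hc, Finset.sum_const, card_edges_cb]
  simp

theorem stmt_11 (Δ d : ℕ) (hd : 1 ≤ d) (hdΔ : d < Δ)
    (n m : ℕ) (hn : n = Δ + d) (hm : m = Δ * d) :
    Fintype.card (Fin Δ ⊕ Fin d) = n ∧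
    (completeBipartiteGraph (Fin Δ) (Fin d)).edgeFinset.card = m ∧
    (∀ v, (completeBipartiteGraph (Fin Δ) (Fin d)).degree v ≤ Δ) ∧
    (∃ v, (completeBipartiteGraph (Fin Δ) (Fin d)).degree v = Δ) ∧
    2 * (Δ : ℝ) * d / ((Δ : ℝ) + d) ≤ 2 * (m : ℝ) / n ∧
    2 * (m : ℝ) / n ≤ 2 * (Δ : ℝ) * (d + 1) / ((Δ : ℝ) + d + 1) ∧
    (irr (completeBipartiteGraph (Fin Δ) (Fin d)) : ℝ) =
      (d : ℝ) * (d + 1) * n +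
        (1 / (Δ : ℝ)) * ((Δ : ℝ) ^ 2 - (2 * d + 1) * Δ - (d : ℝ) ^ 2 - d) * m := by
  subst hn hm
  have hd0 : (0 : ℝ) < d := by exact_mod_cast hd
  have hD0 : (0 : ℝ) < Δ := by exact_mod_cast (by omega : 0 < Δ)
  refine ⟨by simp, card_edges_cb Δ d, ?_, ⟨Sum.inr ⟨0, hd⟩, deg_inr _ _ _⟩, ?_, ?_, ?_⟩
  · rintro (v | v)
    · rw [deg_inl]; exact hdΔ.le
    · rw [deg_inr]
  · push_cast
    rw [mul_assoc]
  · push_cast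
    rw [div_le_div_iff₀ (by positivity) (by positivity)]
    nlinarith [mul_pos hD0 hD0]
  · rw [irr_cb Δ d hdΔ]
    push_cast
    field_simp
    ring
end

section
/- Let Δ and d be integers with 1 ≤ Δ and 0 ≤ d ≤ Δ−1. Set x = d(d+1), y = (Δ² − (2d+1)Δ − d² − d)/(2Δ), and z_i = x/i + y for each integer 1 ≤ i ≤ Δ. Then z_i ≥ 0 for all 1 ≤ i ≤ Δ, z_i + z_j ≥ j − i for all 1 ≤ i < j ≤ Δ, and x + i·y ≥ i·z_i for all 1 ≤ i ≤ Δ. -/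
theorem stmt_18 (Δ d : ℕ) (hΔ : 1 ≤ Δ) (hd : d ≤ Δ - 1)
    (x y : ℝ) (hx : x = (d : ℝ) * (d + 1))
    (hy : y = ((Δ : ℝ) ^ 2 - (2 * d + 1) * Δ - (d : ℝ) ^ 2 - d) / (2 * Δ))
    (z : ℕ → ℝ) (hzdef : ∀ i : ℕ, 1 ≤ i → i ≤ Δ → z i = x / i + y) :
    (∀ i : ℕ, 1 ≤ i → i ≤ Δ → 0 ≤ z i) ∧
    (∀ i j : ℕ, 1 ≤ i → i < j → j ≤ Δ → z i + z j ≥ (j : ℝ) - i) ∧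
    (∀ i : ℕ, 1 ≤ i → i ≤ Δ → x + (i : ℝ) * y ≥ (i : ℝ) * z i) := by
  have hx0 : 0 ≤ x := by rw [hx]; positivity
  have hD : (0 : ℝ) < Δ := by exact_mod_cast hΔ
  have hy2 : 2 * y = Δ - (2 * d + 1) - x / Δ := by
    rw [hy, hx]; field_simp; ring
  have mono : ∀ i : ℕ, 1 ≤ i → i ≤ Δ → x / Δ ≤ x / i := by
    intro i h1 h2
    have hi : (0 : ℝ) < i := by exact_mod_cast h1
    have hiD : (i : ℝ) ≤ Δ := by exact_mod_cast h2
    exact div_le_div_of_nonneg_left hx0 hi hiD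
  have key : ∀ i : ℕ, 1 ≤ i → (2 * d + 1 : ℝ) ≤ x / i + i := by
    intro i h1
    have hi : (0 : ℝ) < i := by exact_mod_cast h1
    have h : (0 : ℝ) ≤ ((i : ℝ) - d) * (i - d - 1) := by
      rcases Nat.lt_or_ge d i with h | h
      · have h' : (d : ℝ) + 1 ≤ i := by exact_mod_cast h
        apply mul_nonneg <;> linarith
      · have h' : (i : ℝ) ≤ d := by exact_mod_cast h
        apply mul_nonneg_of_nonpos_of_nonpos <;> linarith
    have e : x / i + i - (2 * d + 1) = ((i : ℝ) - d) * (i - d - 1) / i := by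
      rw [hx]; field_simp; ring
    have := div_nonneg h hi.le
    linarith
  refine ⟨?_, ?_, ?_⟩
  · intro i h1 h2
    rw [hzdef i h1 h2]
    have a := mono i h1 h2
    have b := key Δ hΔ
    linarith
  · intro i j h1 hij h2
    rw [hzdef i h1 (by omega), hzdef j (by omega) h2]
    have a := mono j (by omega) h2
    have b := key i h1
    have c : (j : ℝ) ≤ Δ := by exact_mod_cast h2
    linarith
  · intro i h1 h2
    have hi : (0 : ℝ) < i := by exact_mod_cast h1
    rw [hzdef i h1 h2, mul_add, mul_div_cancel₀ _ hi.ne']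
end

section
/- Let Δ be a positive integer and let x be a real number such that x ≥ Δ(Δ−k)k/(Δ+k) for every integer k with 1 ≤ k ≤ Δ. Then x ≥ 0, and x/i + x/j ≥ j − i for all integers 1 ≤ i < j ≤ Δ. -/
theorem stmt_19 (Δ : ℕ) (hΔ : 0 < Δ) (x : ℝ)
    (hx : ∀ k : ℕ, 1 ≤ k → k ≤ Δ →
      (Δ : ℝ) * ((Δ : ℝ) - k) * k / ((Δ : ℝ) + k) ≤ x) :
    0 ≤ x ∧ ∀ i j : ℕ, 1 ≤ i → i < j → j ≤ Δ → x / i + x / j ≥ (j : ℝ) - i := by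
  refine ⟨by simpa using hx Δ hΔ le_rfl, ?_⟩
  intro i j hi hij hj
  have h := hx i hi (by omega)
  have hi0 : (0 : ℝ) < i := by exact_mod_cast hi
  have hij' : (i : ℝ) < j := by exact_mod_cast hij
  have hj' : (j : ℝ) ≤ Δ := by exact_mod_cast hj
  generalize (i : ℝ) = a at *
  generalize (j : ℝ) = b at *
  generalize (Δ : ℝ) = D at *
  have hb : 0 < b := by linarith
  have hD : 0 < D + a := by linarith
  rw [div_le_iff₀ hD] at h
  have e : x / a + x / b = x * (a + b) / (a * b) := by
    field_simp
    ring
  rw [ge_iff_le, e, le_div_iff₀ (by positivity)]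
  have h1 : D * (D - a) * a * (a + b) ≤ x * (D + a) * (a + b) :=
    mul_le_mul_of_nonneg_right h (by positivity)
  have h3 : 0 ≤ a * (D + b) + D * b - a ^ 2 := by nlinarith
  have h2 : 0 ≤ a * ((D - b) * (a * (D + b) + D * b - a ^ 2)) :=
    mul_nonneg hi0.le (mul_nonneg (by linarith) h3)
  refine le_of_mul_le_mul_right ?_ hD
  linarith
end
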